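/- Let 0 ≤ l ≤ n. The map 𝔖_n → X_n^{(l)}·𝔖_{l,n−l}, w ↦ w a_l, is a bijection from 𝔖_n onto the set X_n^{(l)}·𝔖_{l,n−l} of products of an element of X_n^{(l)} with an element of 𝔖_{l,n−l}. -/

import Mathlib

open scoped Classical

noncomputable section

/-! ## The hyperoctahedral group `W_n` as signed permutations of `I_n ⊆ ℤ` -/

abbrev P := Equiv.Perm ℤ

/-- `W_n` : permutations of `I_n = {±1, …, ±n}` commuting with `i ↦ -i`,
realized as permutations of `ℤ` fixing everything outside `I_n`. -/
def Wset (n : ℕ) : Set P :=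
  {π | (∀ i : ℤ, π (-i) = - π i) ∧ ∀ i : ℤ, (n : ℤ) < |i| → π i = i}

/-- the generator `t = (1, -1)` -/
def tgen : P := Equiv.swap 1 (-1)

/-- the generator `s_i = (i, i+1)(-i, -(i+1))` -/
def sgen (i : ℕ) : P :=
  Equiv.swap (i : ℤ) ((i : ℤ) + 1) * Equiv.swap (-(i : ℤ)) (-((i : ℤ) + 1))

/-- the generating set `S_n = {t, s_1, …, s_{n-1}}` -/
def Sset (n : ℕ) : Set P := insert tgen (sgen '' Set.Icc 1 (n - 1))

/-- the length function of `W_n` with respect to `S_n` -/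
def len (n : ℕ) (w : P) : ℕ :=
  sInf {k | ∃ l : List P, (∀ g ∈ l, g ∈ Sset n) ∧ l.prod = w ∧ l.length = k}

/-- number of occurrences of `tgen` in a list -/
def tcount (l : List P) : ℕ := (l.map (fun g => if g = tgen then 1 else 0)).sum

/-- `ℓ_t(w)` : the number of occurrences of `t` in a (any) reduced expression of `w` -/
def tlen (n : ℕ) (w : P) : ℕ :=
  sInf {k | ∃ l : List P, (∀ g ∈ l, g ∈ Sset n) ∧ l.prod = w ∧
    l.length = len n w ∧ tcount l = k}

/-- the Bruhat order on `W_n` : `x ≤ y` iff some reduced expression of `y`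
has a subword whose product is `x`. -/
def bruhat (n : ℕ) (x y : P) : Prop :=
  ∃ l l' : List P, (∀ g ∈ l, g ∈ Sset n) ∧ l.prod = y ∧ l.length = len n y ∧
    List.Sublist l' l ∧ l'.prod = x

/-! ## Generalized Robinson–Schensted correspondence -/

abbrev Tab := List (List ℕ)

/-- row insertion of `x` into one row; returns the new row and the bumped entry (if any) -/
def insRow (x : ℕ) : List ℕ → List ℕ × Option ℕ
  | [] => ([x], none)
  | y :: ys =>
    if x < y then (x :: ys, some y)
    else
      let p := insRow x ys
      (y :: p.1, p.2)

/-- Schensted insertion of `x` into a tableau; returns the new tableau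
and the (row, column) coordinates of the newly created box. -/
def insTab (x : ℕ) : Tab → Tab × ℕ × ℕ
  | [] => ([[x]], 0, 0)
  | row :: rest =>
    let p := insRow x row
    match p.2 with
    | none => (p.1 :: rest, 0, row.length)
    | some b =>
      let q := insTab b rest
      (p.1 :: q.1, q.2.1 + 1, q.2.2)

/-- place the label `lbl` at the end of row `pos.1` of the recording tableau -/
def place (lbl : ℕ) (pos : ℕ × ℕ) (T : Tab) : Tab :=
  if pos.1 < T.length then T.set pos.1 ((T.getD pos.1 []) ++ [lbl]) else T ++ [[lbl]]

/-- one step of the generalized RS algorithm: insert `|π(i)|` into `A⁺` or `A⁻`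
according to the sign of `π(i)`, and record `i` in the corresponding `B`-tableau. -/
def RSstep (π : P) (st : (Tab × Tab) × (Tab × Tab)) (i : ℕ) : (Tab × Tab) × (Tab × Tab) :=
  let v := (π (i : ℤ)).natAbs
  if 0 < π (i : ℤ) then
    let p := insTab v st.1.1
    ((p.1, st.1.2), (place i p.2 st.2.1, st.2.2))
  else
    let p := insTab v st.1.2
    ((st.1.1, p.1), (st.2.1, place i p.2 st.2.2))

def RSfull (n : ℕ) (π : P) : (Tab × Tab) × (Tab × Tab) :=
  (((List.range n).map (· + 1)).foldl (RSstep π)) ((([], []), ([], [])))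

/-- the insertion bitableau `A_n(π) = (A⁺, A⁻)` -/
def Atab (n : ℕ) (π : P) : Tab × Tab := (RSfull n π).1

/-- the recording bitableau `B_n(π) = (B⁺, B⁻)` -/
def Btab (n : ℕ) (π : P) : Tab × Tab := (RSfull n π).2

/-- `T` is a standard Young tableau -/
def IsStdTab (T : Tab) : Prop :=
  (∀ row ∈ T, row ≠ [] ∧ row.Chain' (· < ·)) ∧
  T.Chain' (fun r1 r2 => r2.length ≤ r1.length) ∧
  ∀ i j : ℕ, i + 1 < T.length → j < (T.getD (i + 1) []).length →
    (T.getD i []).getD j 0 < (T.getD (i + 1) []).getD j 0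

/-- `(T₁, T₂)` is an `n`-standard bitableau: both standard, entry sets disjoint
with union `{1, …, n}` -/
def IsNStdBitab (n : ℕ) (p : Tab × Tab) : Prop :=
  IsStdTab p.1 ∧ IsStdTab p.2 ∧ (p.1.flatten ++ p.2.flatten).Perm (List.range' 1 n)

/-- the shape of a bitableau -/
def shape2 (p : Tab × Tab) : List ℕ × List ℕ := (p.1.map List.length, p.2.map List.length)

/-! ## Knuth relations -/

/-- `t_i = (i, -i)` -/
def ttgen (i : ℕ) : P := Equiv.swap (i : ℤ) (-(i : ℤ))

/-- `S'_n = S_n ∪ {t_1, …, t_n}` -/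
def Sprime (n : ℕ) : Set P := Sset n ∪ (ttgen '' Set.Icc 1 n)

/-- the extended left descent set `L'(w)` -/
def Ldesc (n : ℕ) (w : P) : Set P := {u ∈ Sprime n | len n (u * w) < len n w}

/-- the elementary relation `x —s→ y` -/
def knuthStep (n : ℕ) (x y : P) : Prop :=
  ∃ i ∈ Set.Icc 1 (n - 1), y = sgen i * x ∧ len n x < len n y ∧
    ¬ (Ldesc n x ⊆ Ldesc n y)

/-- the relation `x ↔_L y` -/
def knuthRel (n : ℕ) : P → P → Prop :=
  Relation.ReflTransGen (fun a b => knuthStep n a b ∨ knuthStep n b a)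

/-! ## Parabolic subgroups, coset representatives and the decomposition -/

/-- the parabolic subgroup `𝔖_n = ⟨s_1, …, s_{n-1}⟩` -/
def SymN (n : ℕ) : Subgroup P := Subgroup.closure (sgen '' Set.Icc 1 (n - 1))

/-- the parabolic subgroup `𝔖_{l, n-l} = ⟨{s_1, …, s_{n-1}} \ {s_l}⟩` -/
def SymLR (n l : ℕ) : Subgroup P :=
  Subgroup.closure (sgen '' {i | 1 ≤ i ∧ i ≤ n - 1 ∧ i ≠ l})

/-- `Y_{l, n-l}` : minimal length representatives of left cosets of `𝔖_{l,n-l}` in `𝔖_n` -/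
def Yset (n l : ℕ) : Set P :=
  {w | w ∈ SymN n ∧ ∀ u ∈ SymLR n l, len n w ≤ len n (w * u)}

/-- `X_n` : minimal length representatives of the left cosets `w 𝔖_n` in `W_n` -/
def Xset (n : ℕ) : Set P :=
  {w | w ∈ Wset n ∧ ∀ u ∈ SymN n, len n w ≤ len n (w * u)}

/-- `X_n^{(l)}` -/
def Xl (n l : ℕ) : Set P := {w ∈ Xset n | tlen n w = l}

/-- `r_1 = t`, `r_{i+1} = s_i r_i` -/
def rgen : ℕ → P
  | 0 => 1
  | 1 => tgen
  | (i + 2) => sgen (i + 1) * rgen (i + 1)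

/-- `a_l = r_1 r_2 ⋯ r_l` -/
def al (l : ℕ) : P := ((List.range l).map (fun k => rgen (k + 1))).prod

/-- the set `X_n^{(l)} ⬝ 𝔖_{l, n-l}` -/
def XSset (n l : ℕ) : Set P := Set.image2 (· * ·) (Xl n l) (SymLR n l : Set P)

/-- `w = a ⬝ a_l ⬝ σ ⬝ b⁻¹` is the canonical decomposition of `w`
(with `a, b ∈ Y_{l,n-l}`, `σ ∈ 𝔖_{l,n-l}` and additivity of lengths) -/
def IsDecomp (n l : ℕ) (w a σ b : P) : Prop :=
  a ∈ Yset n l ∧ b ∈ Yset n l ∧ σ ∈ SymLR n l ∧ w = a * al l * σ * b⁻¹ ∧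
    len n w = len n a + len n (al l) + len n σ + len n b

/-- the relation `w ⇝_L w'` -/
def squig (n : ℕ) (w w' : P) : Prop :=
  ∃ l a σ b a' σ', tlen n w = l ∧ tlen n w' = l ∧
    IsDecomp n l w a σ b ∧ IsDecomp n l w' a' σ' b ∧ knuthRel n σ σ'

/-! ## The two-parameter Iwahori–Hecke algebra and Kazhdan–Lusztig data -/

/-- the ring `A = ℤ[V^{±1}, v^{±1}]`, as the group algebra of `Γ = ℤ × ℤ`
(a monomial `V^i v^j` corresponds to `(i,j) ∈ ℤ × ℤ`). -/
abbrev RR := AddMonoidAlgebra ℤ (ℤ × ℤ)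

/-- the monomial with exponent `g` -/
def mono (g : ℤ × ℤ) : RR := AddMonoidAlgebra.single g 1

/-- `Γ₋` for the lexicographic order with `V ≫ v`: `V^i v^j < 1` -/
def Gneg (g : ℤ × ℤ) : Prop := g.1 < 0 ∨ (g.1 = 0 ∧ g.2 < 0)

/-- an element of `ℤ[Γ₋]` : all monomials lie in `Γ₋` -/
def inNeg (f : RR) : Prop := ∀ g ∈ f.coeff.support, Gneg g

/-- the bar involution of `A`, `V ↦ V⁻¹`, `v ↦ v⁻¹` -/
def barR : RR → RR := fun f => .ofCoeff (Finsupp.equivMapDomain (Equiv.neg (ℤ × ℤ)) f.coeff)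

/-- the parameter `v_s` of a generator (`v_t = V`, `v_{s_i} = v`) -/
def vgen (g : P) : RR := if g = tgen then mono (1, 0) else mono (0, 1)

/-- the inverse `v_s⁻¹` of the parameter of a generator -/
def vgenInv (g : P) : RR := if g = tgen then mono (-1, 0) else mono (0, -1)

/-- the free `A`-module with basis indexed by permutations; the Hecke algebra
`H_n` is carried by the elements supported on `W_n`. -/
abbrev HH := P →₀ RR

/-- the standard basis element `T_w` -/
def TT (w : P) : HH := Finsupp.single w 1

/-- All the data attached to the Iwahori–Hecke algebra `H_n` of `W_n` over
`A = ℤ[V^{±1}, v^{±1}]`: the multiplication, the bar involution, the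
Kazhdan–Lusztig basis `C_w = Σ_y P*_{y,w} T_y` (for the order on `Γ` given
by `Γ₊ = {V^i v^j : i > 0} ∪ {v^j : j > 0}`), and Lusztig's `M`-polynomials,
together with their defining properties. -/
structure KLData (n : ℕ) where
  mul : HH → HH → HH
  mul_add_left : ∀ a b c, mul (a + b) c = mul a c + mul b c
  mul_add_right : ∀ a b c, mul a (b + c) = mul a b + mul a c
  mul_smul_left : ∀ (r : RR) a b, mul (r • a) b = r • mul a b
  mul_smul_right : ∀ (r : RR) a b, mul a (r • b) = r • mul a b
  mul_assoc : ∀ a b c, mul (mul a b) c = mul a (mul b c)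
  one_mul : ∀ a, mul (TT 1) a = a
  mul_one : ∀ a, mul a (TT 1) = a
  /-- `T_w T_{w'} = T_{w w'}` when lengths add -/
  T_mul : ∀ w w', w ∈ Wset n → w' ∈ Wset n →
    len n (w * w') = len n w + len n w' → mul (TT w) (TT w') = TT (w * w')
  /-- the quadratic relations `T_s² = T_1 + (v_s - v_s⁻¹) T_s` -/
  T_sq : ∀ g ∈ Sset n, mul (TT g) (TT g) = TT 1 + (vgen g - vgenInv g) • TT g
  bar : HH → HH
  bar_add : ∀ a b, bar (a + b) = bar a + bar b
  bar_smul : ∀ (r : RR) a, bar (r • a) = barR r • bar a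
  bar_mul : ∀ a b, bar (mul a b) = mul (bar a) (bar b)
  /-- `bar T_s = T_s⁻¹ = T_s + (v_s⁻¹ - v_s) T_1` -/
  bar_gen : ∀ g ∈ Sset n, bar (TT g) = TT g + (vgenInv g - vgen g) • TT 1
  /-- the Kazhdan–Lusztig basis element `C_w`, whose coordinate at `T_y` is
  the polynomial `P*_{y,w}` -/
  C : P → HH
  /-- `P*_{w,w} = 1` -/
  C_self : ∀ w, C w w = 1
  /-- `P*_{y,w} = 0` unless `y ≤ w` -/
  C_supp : ∀ w y, C w y ≠ 0 → bruhat n y w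
  /-- `P*_{y,w} ∈ ℤ[Γ₋]` for `y < w` -/
  C_neg : ∀ w y, y ≠ w → inNeg (C w y)
  /-- `C_w` is bar-invariant -/
  C_bar : ∀ w, w ∈ Wset n → bar (C w) = C w
  /-- `M s w` is the finitely supported family `z ↦ M^s_{z,w}` -/
  M : P → P → (P →₀ RR)
  M_supp : ∀ s w z, (M s w) z ≠ 0 → bruhat n z w ∧ z ≠ w ∧ len n (s * z) < len n z
  /-- the symmetry condition `bar M^s_{y,w} = M^s_{y,w}` -/
  M_bar : ∀ s w z, barR ((M s w) z) = (M s w) z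
  /-- the condition `M^s_{y,w} + Σ_{y<z<w, sz<z} P*_{y,z} M^s_{z,w} - v_s P*_{y,w} ∈ ℤ[Γ₋]` -/
  M_cond : ∀ s ∈ Sset n, ∀ y w, len n (s * y) < len n y → len n w < len n (s * w) →
    bruhat n y w → y ≠ w →
    inNeg ((M s w) y + (M s w).sum (fun z m => if z = y then 0 else C z y * m)
      - vgen s * C w y)
  /-- `C_s C_w = C_{sw} + Σ_{z<w, sz<z} M^s_{z,w} C_z` when `sw > w` -/
  mulC_up : ∀ s ∈ Sset n, ∀ w ∈ Wset n, len n w < len n (s * w) →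
    mul (C s) (C w) = C (s * w) + (M s w).sum (fun z m => m • C z)
  /-- `C_s C_w = (v_s + v_s⁻¹) C_w` when `sw < w` -/
  mulC_down : ∀ s ∈ Sset n, ∀ w ∈ Wset n, len n (s * w) < len n w →
    mul (C s) (C w) = (vgen s + vgenInv s) • C w

/-- `P_{y,w} = v_y⁻¹ v_w P*_{y,w}` -/
def Ppoly (n : ℕ) (D : KLData n) (y w : P) : RR :=
  mono ((tlen n w : ℤ) - (tlen n y : ℤ),
        ((len n w : ℤ) - (tlen n w : ℤ)) - ((len n y : ℤ) - (tlen n y : ℤ))) * D.C w y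

/-- the `R`-polynomials : `bar T_w = Σ_y R_{y,w} T_y` -/
def Rpoly {n : ℕ} (D : KLData n) (y w : P) : RR := (D.bar (TT w)) y

/-- `y ≤_{L,s} w` : `C_y` occurs with non-zero coefficient in `C_s C_w`
(expressed in the `C`-basis), for some `s ∈ S_n`, `y ≠ w` -/
def leLelem {n : ℕ} (D : KLData n) (y w : P) : Prop :=
  ∃ s ∈ Sset n, len n w < len n (s * w) ∧ (y = s * w ∨ (D.M s w) y ≠ 0)

/-- the preorder `≤_L` -/
def leL {n : ℕ} (D : KLData n) : P → P → Prop := Relation.ReflTransGen (leLelem D)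

/-- the equivalence `∼_L`; its classes are the left cells -/
def simL {n : ℕ} (D : KLData n) (y w : P) : Prop := leL D y w ∧ leL D w y

/-- `f` is a polynomial in `q = v²` -/
def isPolyInQ (f : RR) : Prop := ∀ g ∈ f.coeff.support, g.1 = 0 ∧ 0 ≤ g.2 ∧ 2 ∣ g.2

end

lemma sgen_apply (i : ℕ) (hi : 1 ≤ i) (x : ℤ) : sgen i x =
    if x = i then (i : ℤ) + 1 else if x = i + 1 then (i : ℤ) else
    if x = -(i : ℤ) then -(i : ℤ) - 1 else if x = -(i : ℤ) - 1 then -(i : ℤ) else x := by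
  simp only [sgen, Equiv.Perm.mul_apply, Equiv.swap_apply_def]
  split_ifs <;> omega

lemma sgen_sq {i : ℕ} (hi : 1 ≤ i) : sgen i * sgen i = 1 := by
  ext x
  simp only [Equiv.Perm.mul_apply, Equiv.Perm.one_apply]
  rw [sgen_apply i hi, sgen_apply i hi]
  split_ifs <;> omega

lemma tgen_apply (x : ℤ) : tgen x = if x = 1 then -1 else if x = -1 then 1 else x := by
  simp only [tgen, Equiv.swap_apply_def]

lemma ttgen_apply (i : ℕ) (x : ℤ) :
    ttgen i x = if x = i then -(i : ℤ) else if x = -(i : ℤ) then (i : ℤ) else x := by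
  simp only [ttgen, Equiv.swap_apply_def]

lemma rgen_apply (k : ℕ) (x : ℤ) : rgen (k + 1) x =
    if x = 1 then -((k : ℤ) + 1) else if x = -1 then (k : ℤ) + 1 else
    if 2 ≤ x ∧ x ≤ k + 1 then x - 1 else if -((k : ℤ) + 1) ≤ x ∧ x ≤ -2 then x + 1 else x := by
  induction k generalizing x with
  | zero => simp only [rgen, tgen_apply]; split_ifs <;> push_cast at * <;> omega
  | succ k ih =>
    simp only [rgen, Equiv.Perm.mul_apply, ih]
    rw [sgen_apply _ (by omega)]
    split_ifs <;> push_cast at * <;> omega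

lemma al_apply (l : ℕ) (x : ℤ) : al l x =
    if 1 ≤ x ∧ x ≤ l then x - (l + 1) else if -(l : ℤ) ≤ x ∧ x ≤ -1 then x + (l + 1) else x := by
  induction l generalizing x with
  | zero =>
    simp only [al, List.range_zero, List.map_nil, List.prod_nil, Equiv.Perm.one_apply]
    split_ifs <;> push_cast at * <;> omega
  | succ l ih =>
    have h : al (l + 1) = al l * rgen (l + 1) := by
      simp [al, List.range_succ]
    rw [h, Equiv.Perm.mul_apply, ih, rgen_apply]
    split_ifs <;> push_cast at * <;> omega

lemma W_mul {n : ℕ} {a b : P} (ha : a ∈ Wset n) (hb : b ∈ Wset n) : a * b ∈ Wset n := by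
  refine ⟨fun i => ?_, fun i hi => ?_⟩
  · simp only [Equiv.Perm.mul_apply, hb.1, ha.1]
  · simp only [Equiv.Perm.mul_apply, hb.2 i hi, ha.2 i hi]

lemma W_inv {n : ℕ} {a : P} (ha : a ∈ Wset n) : a⁻¹ ∈ Wset n := by
  refine ⟨fun i => ?_, fun i hi => ?_⟩
  · rw [Equiv.Perm.inv_eq_iff_eq, ha.1]; simp
  · rw [Equiv.Perm.inv_eq_iff_eq, ha.2 i hi]

lemma W_one (n : ℕ) : (1 : P) ∈ Wset n := ⟨fun _ => rfl, fun _ _ => rfl⟩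

lemma W_zero {n : ℕ} {a : P} (ha : a ∈ Wset n) : a 0 = 0 := by
  have := ha.1 0
  simp only [neg_zero] at this
  omega

lemma W_range {n : ℕ} {a : P} (ha : a ∈ Wset n) {i : ℤ} (hi : |i| ≤ n) : |a i| ≤ n := by
  by_contra h
  push Not at h
  have := ha.2 _ h
  have := a.injective this
  rw [this] at h
  omega

lemma W_mono {m n : ℕ} (h : m ≤ n) {a : P} (ha : a ∈ Wset m) : a ∈ Wset n :=
  ⟨ha.1, fun i hi => ha.2 i (by omega)⟩

lemma sgen_W {n i : ℕ} (hi : 1 ≤ i) (hi' : i + 1 ≤ n) : sgen i ∈ Wset n := by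
  refine ⟨fun x => ?_, fun x hx => ?_⟩
  · simp only [sgen_apply i hi]; split_ifs <;> omega
  · rw [lt_abs] at hx
    simp only [sgen_apply i hi]; split_ifs <;> omega

lemma ttgen_W {n i : ℕ} (hi' : i ≤ n) : ttgen i ∈ Wset n := by
  refine ⟨fun x => ?_, fun x hx => ?_⟩
  · simp only [ttgen_apply i]; split_ifs <;> omega
  · rw [lt_abs] at hx
    simp only [ttgen_apply i]; split_ifs <;> omega

lemma tgen_eq : tgen = ttgen 1 := by simp [tgen, ttgen]

lemma al_W (l : ℕ) : al l ∈ Wset l := by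
  refine ⟨fun x => ?_, fun x hx => ?_⟩
  · simp only [al_apply]; split_ifs <;> omega
  · rw [lt_abs] at hx
    simp only [al_apply]; split_ifs <;> omega

/-- signed permutations preserving positivity -/
def Pos (n : ℕ) (w : P) : Prop := w ∈ Wset n ∧ ∀ i : ℤ, 0 < i → 0 < w i

lemma Pos_mul {n : ℕ} {a b : P} (ha : Pos n a) (hb : Pos n b) : Pos n (a * b) :=
  ⟨W_mul ha.1 hb.1, fun i hi => ha.2 _ (hb.2 i hi)⟩

lemma Pos_inv {n : ℕ} {a : P} (ha : Pos n a) : Pos n a⁻¹ := by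
  refine ⟨W_inv ha.1, fun i hi => ?_⟩
  by_contra h
  rcases lt_or_eq_of_le (not_lt.mp h) with h | h
  · have h1 := ha.2 (-(a⁻¹ i)) (by omega)
    rw [ha.1.1] at h1
    simp at h1
    omega
  · rw [Equiv.Perm.inv_eq_iff_eq, W_zero ha.1] at h
    omega

/-- positive elements preserving `[1..l]` -/
def PosL (n l : ℕ) (w : P) : Prop := Pos n w ∧ ∀ i : ℤ, 0 < i → (w i ≤ l ↔ i ≤ l)

lemma PosL_mul {n l : ℕ} {a b : P} (ha : PosL n l a) (hb : PosL n l b) : PosL n l (a * b) :=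
  ⟨Pos_mul ha.1 hb.1, fun i hi => by
    rw [Equiv.Perm.mul_apply, ha.2 _ (hb.1.2 i hi), hb.2 i hi]⟩

lemma PosL_inv {n l : ℕ} {a : P} (ha : PosL n l a) : PosL n l a⁻¹ :=
  ⟨Pos_inv ha.1, fun i hi => by
    rw [← ha.2 _ ((Pos_inv ha.1).2 i hi)]; simp⟩

lemma SymLR_PosL {n l : ℕ} {w : P} (hw : w ∈ SymLR n l) : PosL n l w := by
  unfold SymLR at hw
  induction hw using Subgroup.closure_induction with
  | mem x hx =>
    obtain ⟨i, ⟨h1, h2, h3⟩, rfl⟩ := hx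
    refine ⟨⟨sgen_W h1 (by omega), fun x hx => ?_⟩, fun x hx => ?_⟩
    · rw [sgen_apply i h1]; split_ifs <;> omega
    · rw [sgen_apply i h1]; split_ifs <;> omega
  | one => exact ⟨⟨W_one n, fun i hi => hi⟩, fun i _ => Iff.rfl⟩
  | mul x y _ _ hx hy => exact PosL_mul hx hy
  | inv x _ hx => exact PosL_inv hx

/-- signed transposition -/
def tr (a b : ℕ) : P := Equiv.swap (a : ℤ) b * Equiv.swap (-(a : ℤ)) (-b)

lemma tr_apply (a b : ℕ) (ha : 1 ≤ a) (hab : a < b) (x : ℤ) : tr a b x =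
    if x = a then (b : ℤ) else if x = b then (a : ℤ) else
    if x = -(a : ℤ) then -(b : ℤ) else if x = -(b : ℤ) then -(a : ℤ) else x := by
  simp only [tr, Equiv.Perm.mul_apply, Equiv.swap_apply_def]
  split_ifs <;> omega

lemma tr_mem {n l a b : ℕ} (ha : 1 ≤ a) (hab : a < b) (hb : b ≤ n)
    (hbl : b ≤ l ∨ l < a) : tr a b ∈ SymLR n l := by
  induction b, hab using Nat.le_induction with
  | base =>
    apply Subgroup.subset_closure
    exact ⟨a, ⟨ha, by omega, by omega⟩, by simp [tr, sgen]⟩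
  | succ b hab ih =>
    have hs : sgen b ∈ SymLR n l :=
      Subgroup.subset_closure ⟨b, ⟨by omega, by omega, by omega⟩, rfl⟩
    have h : tr a (b + 1) = sgen b * tr a b * sgen b := by
      have e1 : sgen b a = a := by
        rw [sgen_apply b (by omega)]; split_ifs <;> omega
      have e2 : sgen b b = b + 1 := by
        rw [sgen_apply b (by omega)]; split_ifs <;> omega
      have e3 : sgen b (-a) = -a := by
        rw [sgen_apply b (by omega)]; split_ifs <;> omega
      have e4 : sgen b (-b) = -(b + 1) := by
        rw [sgen_apply b (by omega)]; split_ifs <;> omega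
      unfold tr
      rw [← mul_assoc, Equiv.mul_swap_eq_swap_mul (sgen b), mul_assoc (Equiv.swap _ _) (sgen b),
        Equiv.mul_swap_eq_swap_mul (sgen b), e1, e2, e3, e4, mul_assoc, mul_assoc, sgen_sq (by omega)]
      push_cast
      rw [mul_one]
    rw [h]
    exact mul_mem (mul_mem hs (ih (by omega) (by omega))) hs

lemma W_zero_one {w : P} (h : w ∈ Wset 0) : w = 1 := by
  ext x
  by_cases hx : x = 0
  · subst hx; simpa using W_zero h
  · exact h.2 x (by simpa using hx)

lemma PosL_mem_aux {n l : ℕ} (m : ℕ) (hm : m ≤ n) (w : P) (hw : PosL m l w) :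
    w ∈ SymLR n l := by
  induction m generalizing w with
  | zero => rw [W_zero_one hw.1.1]; exact one_mem _
  | succ m ih =>
    have key : ∀ v : P, PosL (m + 1) l v → v ((m : ℤ) + 1) = m + 1 → v ∈ SymLR n l := by
      intro v hv h
      refine ih (by omega) v ⟨⟨⟨hv.1.1.1, fun i hi => ?_⟩, hv.1.2⟩, hv.2⟩
      by_cases h1 : i = m + 1
      · rw [h1, h]
      by_cases h2 : i = -((m : ℤ) + 1)
      · rw [h2, hv.1.1.1, h]
      apply hv.1.1.2
      rw [lt_abs] at *
      push_cast
      omega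
    have hwi := PosL_inv hw
    have h0 := hwi.1.2 ((m : ℤ) + 1) (by omega)
    have h1 := hwi.2 ((m : ℤ) + 1) (by omega)
    have h2 := W_range hwi.1.1 (i := (m : ℤ) + 1) (by rw [abs_le]; push_cast; omega)
    obtain ⟨k, hk⟩ := Int.eq_ofNat_of_zero_le h0.le
    rw [hk] at h0 h1 h2
    rw [abs_le] at h2
    push_cast at h2
    have hk' : w k = m + 1 := by rw [← hk]; simp
    by_cases hkm : k = m + 1
    · apply key w hw
      rw [hkm] at hk'
      exact_mod_cast hk'
    · have ht : tr k (m + 1) ∈ SymLR n l := tr_mem (by omega) (by omega) hm (by omega)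
      have ht' : tr k (m + 1) ∈ SymLR (m + 1) l :=
        tr_mem (by omega) (by omega) le_rfl (by omega)
      have := key (w * tr k (m + 1)) (PosL_mul hw (SymLR_PosL ht')) (by
        rw [Equiv.Perm.mul_apply, tr_apply k _ (by omega) (by omega)]
        push_cast
        split_ifs <;> omega)
      exact (Subgroup.mul_mem_cancel_right _ ht).mp this

lemma mem_SymLR {n l : ℕ} {w : P} : w ∈ SymLR n l ↔ PosL n l w :=
  ⟨SymLR_PosL, PosL_mem_aux n le_rfl w⟩

lemma SymN_eq (n : ℕ) : SymN n = SymLR n 0 := by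
  unfold SymN SymLR
  congr 2
  ext i
  simp only [Set.mem_Icc, Set.mem_setOf_eq]
  omega

lemma mem_SymN {n : ℕ} {w : P} : w ∈ SymN n ↔ Pos n w := by
  rw [SymN_eq, mem_SymLR]
  refine ⟨fun h => h.1, fun h => ⟨h, fun i hi => ?_⟩⟩
  have := h.2 i hi
  push_cast
  omega

/-- `L` is a word in the generators -/
def Wd (n : ℕ) (L : List P) : Prop := ∀ g ∈ L, g ∈ Sset n

lemma Sset_cases {n : ℕ} {g : P} (hg : g ∈ Sset n) :
    g = tgen ∨ ∃ i : ℕ, 1 ≤ i ∧ i + 1 ≤ n ∧ g = sgen i := by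
  rcases hg with h | ⟨i, hi, rfl⟩
  · exact Or.inl h
  · obtain ⟨h1, h2⟩ := hi
    exact Or.inr ⟨i, h1, by omega, rfl⟩

lemma Wd_W {n : ℕ} (hn : 1 ≤ n) {L : List P} (hL : Wd n L) : L.prod ∈ Wset n := by
  induction L with
  | nil => exact W_one n
  | cons g L ih =>
    rw [List.prod_cons]
    refine W_mul ?_ (ih fun x hx => hL x (List.mem_cons_of_mem _ hx))
    rcases Sset_cases (hL g List.mem_cons_self) with h | ⟨i, h1, h2, rfl⟩
    · rw [h, tgen_eq]; exact ttgen_W hn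
    · exact sgen_W h1 h2

lemma Wd_cons {n : ℕ} {g : P} {L : List P} : Wd n (g :: L) ↔ g ∈ Sset n ∧ Wd n L := by
  simp [Wd]

lemma conj_aux {u : P} {i a : ℕ} (hi : 1 ≤ i) (ha : 1 ≤ a) (hu : ∀ x, u (-x) = - u x)
    (h : (u i = a ∧ u (i + 1) = a + 1) ∨ (u i = -(a : ℤ) - 1 ∧ u (i + 1) = -(a : ℤ))) :
    sgen a * u = u * sgen i := by
  ext x
  simp only [Equiv.Perm.mul_apply]
  rw [sgen_apply a ha, sgen_apply i hi]
  have e1 := hu i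
  have e2 := hu (i + 1)
  have e2' : -((i : ℤ) + 1) = -(i : ℤ) - 1 := by ring
  rw [e2'] at e2
  have j1 : u x = u i → x = i := fun h => u.injective h
  have j2 : u x = u (i + 1) → x = i + 1 := fun h => u.injective h
  have j3 : u x = u (-i) → x = -i := fun h => u.injective h
  have j4 : u x = u (-(i : ℤ) - 1) → x = -(i : ℤ) - 1 := fun h => u.injective h
  by_cases x1 : x = i
  · subst x1; rw [if_pos rfl]; split_ifs <;> omega
  by_cases x2 : x = i + 1
  · subst x2; rw [if_neg (by omega : ¬ (i : ℤ) + 1 = i), if_pos rfl]; split_ifs <;> omega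
  by_cases x3 : x = -i
  · subst x3
    rw [if_neg (by omega : ¬ -(i : ℤ) = i), if_neg (by omega : ¬ -(i : ℤ) = i + 1), if_pos rfl]
    split_ifs <;> omega
  by_cases x4 : x = -(i : ℤ) - 1
  · subst x4
    rw [if_neg x1, if_neg x2, if_neg x3, if_pos rfl]
    split_ifs <;> omega
  rw [if_neg x1, if_neg x2, if_neg x3, if_neg x4]
  split_ifs <;> omega

lemma ttgen_sq (i : ℕ) : ttgen i * ttgen i = 1 := by
  simp [ttgen]

lemma exch_s {n : ℕ} (hn : 1 ≤ n) {i : ℕ} (hi : 1 ≤ i) (L : List P) (hL : Wd n L)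
    (h : L.prod (i + 1) < L.prod i) :
    ∃ L', Wd n L' ∧ L'.prod = L.prod * sgen i ∧ L'.length + 1 = L.length := by
  induction L with
  | nil => simp at h
  | cons g L ih =>
    rw [Wd_cons] at hL
    have hu := Wd_W hn hL.2
    set u := L.prod with hu_def
    rw [List.prod_cons, ← hu_def] at h ⊢
    simp only [Equiv.Perm.mul_apply] at h
    by_cases h1 : u (i + 1) < u i
    · obtain ⟨L', h2, h3, h4⟩ := ih hL.2 h1
      refine ⟨g :: L', Wd_cons.mpr ⟨hL.1, h2⟩, ?_, by simpa using h4⟩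
      rw [List.prod_cons, h3, mul_assoc]
    · have hne : u (i + 1) ≠ u i := fun hh => by have := u.injective hh; omega
      have hne2 : u (i + 1) ≠ - u i := fun hh => by
        rw [← hu.1] at hh; have := u.injective hh; omega
      refine ⟨L, hL.2, ?_, rfl⟩
      rcases Sset_cases hL.1 with rfl | ⟨a, ha, _, rfl⟩
      · exfalso
        rw [tgen_apply, tgen_apply] at h
        have z1 : u i ≠ 0 := fun hh => by
          rw [← W_zero hu] at hh; have := u.injective hh; omega
        have z2 : u (i + 1) ≠ 0 := fun hh => by
          rw [← W_zero hu] at hh; have := u.injective hh; omega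
        split_ifs at h <;> omega
      · rw [conj_aux hi ha hu.1, mul_assoc, sgen_sq hi, mul_one]
        rw [sgen_apply a ha, sgen_apply a ha] at h
        have z1 : u i ≠ 0 := fun hh => by
          rw [← W_zero hu] at hh; have := u.injective hh; omega
        have z2 : u (i + 1) ≠ 0 := fun hh => by
          rw [← W_zero hu] at hh; have := u.injective hh; omega
        split_ifs at h <;> omega

lemma conj_t {u : P} {i : ℕ} (hi : 1 ≤ i) (hu : ∀ x, u (-x) = - u x)
    (h : u i = 1 ∨ u i = -1) : tgen * u = u * ttgen i := by
  ext x
  simp only [Equiv.Perm.mul_apply]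
  rw [tgen_apply, ttgen_apply]
  have e1 := hu i
  have j1 : u x = u i → x = i := fun h => u.injective h
  have j3 : u x = u (-i) → x = -i := fun h => u.injective h
  by_cases x1 : x = i
  · subst x1; rw [if_pos rfl]; split_ifs <;> omega
  by_cases x3 : x = -i
  · subst x3
    rw [if_neg (by omega : ¬ -(i : ℤ) = i), if_pos rfl]
    split_ifs <;> omega
  rw [if_neg x1, if_neg x3]
  split_ifs <;> omega

lemma exch_t {n : ℕ} (hn : 1 ≤ n) {i : ℕ} (hi : 1 ≤ i) (L : List P) (hL : Wd n L)
    (h : L.prod i < 0) :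
    ∃ L', Wd n L' ∧ L'.prod = L.prod * ttgen i ∧ L'.length + 1 = L.length := by
  induction L with
  | nil => simp at h; omega
  | cons g L ih =>
    rw [Wd_cons] at hL
    have hu := Wd_W hn hL.2
    set u := L.prod with hu_def
    rw [List.prod_cons, ← hu_def] at h ⊢
    simp only [Equiv.Perm.mul_apply] at h
    by_cases h1 : u i < 0
    · obtain ⟨L', h2, h3, h4⟩ := ih hL.2 h1
      refine ⟨g :: L', Wd_cons.mpr ⟨hL.1, h2⟩, ?_, by simpa using h4⟩
      rw [List.prod_cons, h3, mul_assoc]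
    · refine ⟨L, hL.2, ?_, rfl⟩
      rcases Sset_cases hL.1 with rfl | ⟨a, ha, _, rfl⟩
      · rw [conj_t hi hu.1, mul_assoc, ttgen_sq, mul_one]
        rw [tgen_apply] at h
        split_ifs at h <;> omega
      · rw [sgen_apply a ha] at h
        split_ifs at h <;> omega

/-- the number of negative values -/
def neg (n : ℕ) (w : P) : ℕ := ((Finset.Icc 1 n).filter fun i : ℕ => w i < 0).card

lemma len_le {n : ℕ} {L : List P} (hL : Wd n L) : len n L.prod ≤ L.length :=
  Nat.sInf_le ⟨L, hL, rfl, rfl⟩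

lemma neg_congr {n : ℕ} {v w : P} (h : ∀ i : ℕ, 1 ≤ i → (v i < 0 ↔ w i < 0)) :
    neg n v = neg n w := by
  unfold neg
  congr 1
  apply Finset.filter_congr
  intro i hi
  exact h i (Finset.mem_Icc.mp hi).1

lemma neg_t {n : ℕ} (w : P) {i : ℕ} (hi : 1 ≤ i) (hin : i ≤ n) (hw : w ∈ Wset n)
    (h : w i < 0) : neg n (w * ttgen i) + 1 = neg n w := by
  unfold neg
  rw [← Finset.card_erase_add_one
    (s := (Finset.Icc 1 n).filter fun i : ℕ => w i < 0) (a := i) (by simp; omega)]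
  congr 2
  ext j
  simp only [Finset.mem_filter, Finset.mem_Icc, Finset.mem_erase, Equiv.Perm.mul_apply,
    ttgen_apply]
  by_cases hj : j = i
  · subst hj
    rw [if_pos rfl, hw.1]
    simp; omega
  · rw [if_neg (by omega)]
    by_cases hj' : 1 ≤ j
    · rw [if_neg (by omega)]; tauto
    · tauto

lemma tcount_red {n : ℕ} (hn : 1 ≤ n) (L : List P) (hL : Wd n L)
    (hr : ∀ L', Wd n L' → L'.prod = L.prod → L.length ≤ L'.length) :
    tcount L = neg n L.prod := by
  induction L with
  | nil =>
    have : ∀ i : ℕ, ¬ ((i : ℤ) < 0) := fun i => by omega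
    simp [tcount, neg, this]
  | cons g L ih =>
    rw [Wd_cons] at hL
    have hu := Wd_W hn hL.2
    have ih' := ih hL.2 (fun L' h1 h2 => by
      have := hr (g :: L') (Wd_cons.mpr ⟨hL.1, h1⟩) (by simp [h2])
      simpa using this)
    have htc : tcount (g :: L) = (if g = tgen then 1 else 0) + tcount L := by
      simp [tcount]
    rw [htc, ih', List.prod_cons]
    rcases Sset_cases hL.1 with rfl | ⟨a, ha, _, rfl⟩
    · rw [if_pos rfl]
      obtain ⟨i, hi, hin, hui⟩ : ∃ i : ℕ, 1 ≤ i ∧ i ≤ n ∧ (L.prod i = 1 ∨ L.prod i = -1) := by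
        have hi' := W_inv hu
        have hr := W_range hi' (i := 1) (by simp; omega)
        have hne : (L.prod)⁻¹ 1 ≠ 0 := by
          rw [Ne, Equiv.Perm.inv_eq_iff_eq, W_zero hu]; omega
        rw [abs_le] at hr
        refine ⟨((L.prod)⁻¹ 1).natAbs, by omega, by omega, ?_⟩
        rcases Int.natAbs_eq ((L.prod)⁻¹ 1) with h | h
        · left; rw [← h]; simp
        · right
          have : (((L.prod)⁻¹ 1).natAbs : ℤ) = -((L.prod)⁻¹ 1) := by omega
          rw [this, hu.1]; simp
      have hc := conj_t hi hu.1 hui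
      rcases hui with h | h
      · have h1 : (tgen * L.prod) i < 0 := by simp [h, tgen_apply]
        have h2 := neg_t (n := n) (tgen * L.prod) hi hin
          (by rw [hc]; exact W_mul hu (ttgen_W hin)) h1
        rw [← h2, hc, mul_assoc, ttgen_sq, mul_one, add_comm]
      · exfalso
        obtain ⟨L', h1, h2, h3⟩ := exch_t hn hi L hL.2 (by omega)
        have := hr L' h1 (by rw [h2, List.prod_cons, hc])
        simp at this
        omega
    · have hne : sgen a ≠ tgen := by
        intro h
        have := congrArg (fun f : P => f a) h
        simp only [sgen_apply a ha, tgen_apply, if_true] at this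
        split_ifs at this <;> omega
      rw [if_neg hne, zero_add]
      apply neg_congr
      intro i _
      rw [Equiv.Perm.mul_apply, sgen_apply a ha]
      split_ifs <;> omega

lemma ttgen_mem {n i : ℕ} (hi : 1 ≤ i) (hin : i ≤ n) :
    ttgen i ∈ Subgroup.closure (Sset n) := by
  induction i, hi using Nat.le_induction with
  | base => rw [← tgen_eq]; exact Subgroup.subset_closure (Set.mem_insert _ _)
  | succ i hi ih =>
    have hs : sgen i ∈ Subgroup.closure (Sset n) :=
      Subgroup.subset_closure (Set.mem_insert_of_mem _ ⟨i, ⟨hi, by omega⟩, rfl⟩)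
    have h : ttgen (i + 1) = sgen i * ttgen i * sgen i := by
      have e2 : sgen i i = i + 1 := by
        rw [sgen_apply i (by omega)]; split_ifs <;> omega
      have e4 : sgen i (-i) = -(i + 1) := by
        rw [sgen_apply i (by omega)]; split_ifs <;> omega
      unfold ttgen
      rw [Equiv.mul_swap_eq_swap_mul, e2, e4, mul_assoc, sgen_sq (by omega)]
      push_cast
      rw [mul_one]
    rw [h]
    exact mul_mem (mul_mem hs (ih (by omega))) hs

lemma W_gen {n : ℕ} (k : ℕ) (w : P) (hw : w ∈ Wset n) (hk : neg n w = k) :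
    w ∈ Subgroup.closure (Sset n) := by
  induction k generalizing w with
  | zero =>
    have h : w ∈ SymN n := by
      rw [mem_SymN]
      refine ⟨hw, fun i hi => ?_⟩
      by_cases hin : i ≤ n
      · lift i to ℕ using hi.le
        unfold neg at hk
        rw [Finset.card_eq_zero, Finset.filter_eq_empty_iff] at hk
        have h1 := hk (x := i) (Finset.mem_Icc.mpr ⟨by omega, by omega⟩)
        have : w i ≠ 0 := fun hh => by
          rw [← W_zero hw] at hh; have := w.injective hh; omega
        omega
      · rw [hw.2 i (by rw [lt_abs]; omega)]; exact hi
    exact Subgroup.closure_mono (Set.subset_insert _ _) h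
  | succ k ih =>
    have : 0 < neg n w := by omega
    unfold neg at this
    rw [Finset.card_pos] at this
    obtain ⟨i, hi⟩ := this
    simp only [Finset.mem_filter, Finset.mem_Icc] at hi
    obtain ⟨⟨h1, h2⟩, h3⟩ := hi
    have h4 := neg_t w h1 h2 hw h3
    have := ih (w * ttgen i) (W_mul hw (ttgen_W h2)) (by omega)
    exact (Subgroup.mul_mem_cancel_right _ (ttgen_mem h1 h2)).mp this

lemma W_word {n : ℕ} {w : P} (hw : w ∈ Wset n) : ∃ L, Wd n L ∧ L.prod = w := by
  have h := W_gen _ w hw rfl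
  rw [← Subgroup.mem_toSubmonoid, Subgroup.closure_toSubmonoid] at h
  obtain ⟨L, h1, h2⟩ := Submonoid.exists_list_of_mem_closure h
  refine ⟨L, fun g hg => ?_, h2⟩
  rcases h1 g hg with h | h
  · exact h
  · rw [Set.mem_inv] at h
    have : g⁻¹ = g := by
      rcases Sset_cases h with h | ⟨a, ha, _, h⟩
      · have h' := ttgen_sq 1
        rw [← tgen_eq, ← h] at h'
        have := eq_inv_of_mul_eq_one_left h'
        simpa using this
      · have h' := sgen_sq ha
        rw [← h] at h'
        have := eq_inv_of_mul_eq_one_left h'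
        simpa using this
    rwa [this] at h

lemma W_red {n : ℕ} {w : P} (hw : w ∈ Wset n) :
    ∃ L, Wd n L ∧ L.prod = w ∧ L.length = len n w := by
  obtain ⟨L, h1, h2⟩ := W_word hw
  exact Nat.sInf_mem (s := {k | ∃ l : List P, (∀ g ∈ l, g ∈ Sset n) ∧ l.prod = w ∧ l.length = k})
    ⟨L.length, L, h1, h2, rfl⟩

lemma tlen_eq {n : ℕ} (hn : 1 ≤ n) {w : P} (hw : w ∈ Wset n) : tlen n w = neg n w := by
  have key : {k | ∃ l : List P, (∀ g ∈ l, g ∈ Sset n) ∧ l.prod = w ∧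
      l.length = len n w ∧ tcount l = k} = {neg n w} := by
    have hred : ∀ L, Wd n L → L.prod = w → L.length = len n w → tcount L = neg n w := by
      intro L h1 h2 h3
      rw [← h2]
      apply tcount_red hn L h1
      intro L' h4 h5
      rw [h3, ← h2, ← h5]
      exact len_le h4
    ext k
    simp only [Set.mem_setOf_eq, Set.mem_singleton_iff]
    constructor
    · rintro ⟨L, h1, h2, h3, rfl⟩
      exact hred L h1 h2 h3
    · rintro rfl
      obtain ⟨L, h1, h2, h3⟩ := W_red hw
      exact ⟨L, h1, h2, h3, hred L h1 h2 h3⟩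
  unfold tlen
  rw [key, csInf_singleton]

lemma Xset_incr {n : ℕ} (hn : 1 ≤ n) {w : P} (hw : w ∈ Xset n) {i : ℕ} (hi : 1 ≤ i)
    (hin : i + 1 ≤ n) : w i < w (i + 1) := by
  by_contra h
  have hne : w i ≠ w (i + 1) := fun hh => by have := w.injective hh; omega
  obtain ⟨L, h1, h2, h3⟩ := W_red hw.1
  obtain ⟨L', h4, h5, h6⟩ := exch_s hn hi L h1 (by rw [h2]; omega)
  have h7 := hw.2 (sgen i) (Subgroup.subset_closure ⟨i, ⟨hi, by omega⟩, rfl⟩)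
  have h8 := len_le h4
  rw [h5, h2] at h8
  omega

lemma Xset_mono {n : ℕ} (hn : 1 ≤ n) {w : P} (hw : w ∈ Xset n) {i j : ℕ} (hi : 1 ≤ i)
    (hij : i ≤ j) (hj : j ≤ n) : w i ≤ w j := by
  induction j, hij using Nat.le_induction with
  | base => exact le_rfl
  | succ j hij ih =>
    have := Xset_incr hn hw (i := j) (by omega) hj
    have := ih (by omega)
    push_cast
    omega

/-- for an increasing element, the negatives are the first ones -/
lemma Xset_neg {n : ℕ} (hn : 1 ≤ n) {w : P} (hw : w ∈ Xset n) {i : ℕ} (hi : 1 ≤ i)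
    (hin : i ≤ n) : w i < 0 ↔ i ≤ neg n w := by
  constructor
  · intro h
    have : Finset.Icc 1 i ⊆ (Finset.Icc 1 n).filter fun i : ℕ => w i < 0 := by
      intro j hj
      rw [Finset.mem_Icc] at hj
      simp only [Finset.mem_filter, Finset.mem_Icc]
      have := Xset_mono hn hw hj.1 hj.2 hin
      exact ⟨⟨by omega, by omega⟩, by omega⟩
    have := Finset.card_le_card this
    simp only [Nat.card_Icc] at this
    unfold neg
    omega
  · intro h
    by_contra h'
    have : ((Finset.Icc 1 n).filter fun i : ℕ => w i < 0) ⊆ Finset.Icc 1 (i - 1) := by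
      intro j hj
      simp only [Finset.mem_filter, Finset.mem_Icc] at hj
      rw [Finset.mem_Icc]
      refine ⟨hj.1.1, ?_⟩
      by_contra hc
      have := Xset_mono hn hw hi (by omega : i ≤ j) hj.1.2
      omega
    have := Finset.card_le_card this
    simp only [Nat.card_Icc] at this
    unfold neg at h
    omega

lemma coset_min {n : ℕ} (v : P) (hv : v ∈ Wset n) : ∃ u ∈ SymN n, v * u ∈ Xset n := by
  have hne : (Set.range fun u : SymN n => len n (v * u)).Nonempty := ⟨_, 1, rfl⟩
  obtain ⟨u, hu⟩ := Nat.sInf_mem hne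
  refine ⟨u, u.2, W_mul hv (mem_SymN.mp u.2).1, fun x hx => ?_⟩
  simp only at hu
  rw [hu, mul_assoc]
  exact Nat.sInf_le ⟨u * ⟨x, hx⟩, rfl⟩

lemma neg_mul_Pos {n : ℕ} (v u : P) (hu : Pos n u) : neg n (v * u) = neg n v := by
  have hinv := Pos_inv hu
  have hb : ∀ {u : P}, Pos n u → ∀ i : ℕ, 1 ≤ i → i ≤ n →
      ((u i).toNat : ℤ) = u i ∧ 1 ≤ (u i).toNat ∧ (u i).toNat ≤ n := by
    intro u hu i h1 h2
    have h3 := hu.2 i (by omega)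
    have h4 := W_range hu.1 (i := i) (by simp; omega)
    rw [abs_le] at h4
    omega
  unfold neg
  refine Finset.card_bij' (fun i _ => (u i).toNat) (fun i _ => (u⁻¹ i).toNat) ?_ ?_ ?_ ?_
  · intro i hi
    simp only [Finset.mem_filter, Finset.mem_Icc] at hi ⊢
    obtain ⟨h1, h2⟩ := hb hu i hi.1.1 hi.1.2
    rw [h1]
    exact ⟨h2, hi.2⟩
  · intro i hi
    simp only [Finset.mem_filter, Finset.mem_Icc] at hi ⊢
    obtain ⟨h1, h2⟩ := hb hinv i hi.1.1 hi.1.2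
    rw [h1]
    exact ⟨h2, by simpa using hi.2⟩
  · intro i hi
    simp only [Finset.mem_filter, Finset.mem_Icc] at hi
    obtain ⟨h1, h2⟩ := hb hu i hi.1.1 hi.1.2
    simp only [h1]
    simp
  · intro i hi
    simp only [Finset.mem_filter, Finset.mem_Icc] at hi
    obtain ⟨h1, h2⟩ := hb hinv i hi.1.1 hi.1.2
    simp only [h1]
    simp

/-- For `0 ≤ l ≤ n`, the map `𝔖_n → X_n^{(l)}·𝔖_{l,n-l}`, `w ↦ w a_l`,
is a bijection. -/
theorem Sym_mul_al_bij (n l : ℕ) (hn : 1 ≤ n) (hl : l ≤ n) :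
    Set.BijOn (fun w => w * al l) (SymN n : Set P) (XSset n l) := by
  have halW : al l ∈ Wset n := W_mono hl (al_W l)
  refine ⟨?_, ?_, ?_⟩
  · intro w hw
    have hwP := mem_SymN.mp hw
    have hsign : ∀ i : ℕ, 1 ≤ i → ((w * al l) i < 0 ↔ i ≤ l) := by
      intro i hi
      rw [Equiv.Perm.mul_apply, al_apply]
      by_cases h : i ≤ l
      · rw [if_pos (by omega)]
        have h1 := hwP.2 (-((i : ℤ) - (l + 1))) (by omega)
        rw [hwP.1.1] at h1
        simp only [h, iff_true]
        omega
      · rw [if_neg (by omega), if_neg (by omega)]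
        have := hwP.2 i (by omega)
        simp only [h, iff_false]
        omega
    have hv : w * al l ∈ Wset n := W_mul hwP.1 halW
    obtain ⟨u, hu, hx⟩ := coset_min _ hv
    have huP := mem_SymN.mp hu
    have hneg : neg n (w * al l) = l := by
      unfold neg
      have : ((Finset.Icc 1 n).filter fun i : ℕ => (w * al l) i < 0) = Finset.Icc 1 l := by
        ext i
        simp only [Finset.mem_filter, Finset.mem_Icc]
        constructor
        · rintro ⟨⟨h1, h2⟩, h3⟩
          exact ⟨h1, (hsign i h1).mp h3⟩
        · rintro ⟨h1, h2⟩
          exact ⟨⟨h1, by omega⟩, (hsign i h1).mpr h2⟩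
      rw [this]; simp
    have hnegx : neg n (w * al l * u) = l := by rw [neg_mul_Pos _ _ huP, hneg]
    refine ⟨w * al l * u, ⟨hx, by rw [tlen_eq hn hx.1, hnegx]⟩, u⁻¹, ?_, by simp⟩
    apply inv_mem
    rw [mem_SymLR]
    refine ⟨huP, fun i hi => ?_⟩
    by_cases hin : i ≤ n
    · have h3 := huP.2 i hi
      lift i to ℕ using hi.le
      have h1 := Xset_neg hn hx (i := i) (by omega) (by omega)
      rw [hnegx, Equiv.Perm.mul_apply] at h1
      have h2 := hsign (u i).toNat (by omega)
      rw [Int.toNat_of_nonneg h3.le] at h2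
      rw [h1] at h2
      omega
    · rw [huP.1.2 i (by rw [lt_abs]; omega)]
  · intro a _ b _ h
    exact mul_right_cancel h
  · rintro _ ⟨x, ⟨hx, hxl⟩, σ, hσ, rfl⟩
    have hσP := mem_SymLR.mp hσ
    rw [tlen_eq hn hx.1] at hxl
    refine ⟨x * σ * (al l)⁻¹, ?_, by simp⟩
    rw [SetLike.mem_coe, mem_SymN]
    refine ⟨W_mul (W_mul hx.1 hσP.1.1) (W_inv halW), fun i hi => ?_⟩
    -- sign of x on positive arguments
    have hsx : ∀ j : ℤ, 0 < j → (x j < 0 ↔ j ≤ l) := by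
      intro j hj
      by_cases hjn : j ≤ n
      · lift j to ℕ using hj.le
        have := Xset_neg hn hx (i := j) (by omega) (by omega)
        rw [hxl] at this
        omega
      · rw [hx.1.2 j (by rw [lt_abs]; omega)]
        omega
    simp only [Equiv.Perm.mul_apply]
    by_cases h : i ≤ l
    · have e : (al l)⁻¹ i = -((l : ℤ) + 1 - i) := by
        rw [Equiv.Perm.inv_eq_iff_eq, al_apply]
        rw [if_neg (by omega), if_pos (by omega)]; ring
      rw [e, hσP.1.1.1, hx.1.1]
      have h1 := (hσP.2 ((l : ℤ) + 1 - i) (by omega)).mpr (by omega)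
      have h2 := (hsx _ (hσP.1.2 ((l : ℤ) + 1 - i) (by omega))).mpr h1
      omega
    · have e : (al l)⁻¹ i = i := by
        rw [Equiv.Perm.inv_eq_iff_eq, al_apply]
        rw [if_neg (by omega), if_neg (by omega)]
      rw [e]
      have h0 := hσP.1.2 i hi
      have h1 := hσP.2 i hi
      have h2 := hsx _ h0
      have : x (σ i) ≠ 0 := fun hh => by
        rw [← W_zero hx.1] at hh; have := x.injective hh; omega
      omega
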